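/- Let a_0(n) = 2 and a_1(n) = −3 for all n (so that D_n^{M,1} reproduces e_0 and e_1). There exists a constant C > 0, independent of n, x and g, such that for every twice continuously differentiable g on [0,1], every n ≥ 1, and every x ∈ [0,1], |D_n^{M,1}(g; x) − g(x) − (1/2) D_n^{M,1}((t − x)^2; x) g″(x)| ≤ C (1/n) ω(g″; 1/√n), where ω denotes the first-order modulus of continuity on [0,1]. -/

import Mathlib

open Filter Topology

/-- Bernstein basis polynomial `p_{n,k}(x)`, zero when `k < 0` or `k > n`. -/
noncomputable def bern (n : ℕ) (k : ℤ) (x : ℝ) : ℝ :=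
  if 0 ≤ k ∧ k ≤ (n : ℤ) then (n.choose k.toNat : ℝ) * x ^ k.toNat * (1 - x) ^ (n - k.toNat)
  else 0

/-- Modified Bernstein basis `p_{n,k}^{M,1}(x)` of Khosravian-Arab et al. -/
noncomputable def pM1 (a0 a1 : ℕ → ℝ) (n : ℕ) (k : ℤ) (x : ℝ) : ℝ :=
  (a1 n * x + a0 n) * bern (n - 1) k x + (a1 n * (1 - x) + a0 n) * bern (n - 1) (k - 1) x

/-- First-order modified Durrmeyer operator `D_n^{M,1}(f;x)`. -/
noncomputable def DM1 (a0 a1 : ℕ → ℝ) (n : ℕ) (f : ℝ → ℝ) (x : ℝ) : ℝ :=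
  ((n : ℝ) + 1) * ∑ k ∈ Finset.range (n + 1),
    pM1 a0 a1 n k x * ∫ t in (0:ℝ)..1, bern n k t * f t

/-- First-order modulus of continuity of `f` on `[0,1]`. -/
noncomputable def omega1 (f : ℝ → ℝ) (δ : ℝ) : ℝ :=
  sSup {v | ∃ t ∈ Set.Icc (0:ℝ) 1, ∃ s ∈ Set.Icc (0:ℝ) 1, |t - s| ≤ δ ∧ v = |f t - f s|}


/-- Bernstein basis with natural index. -/
noncomputable def qb (n k : ℕ) (t : ℝ) : ℝ := (n.choose k : ℝ) * t ^ k * (1 - t) ^ (n - k)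

lemma bern_eq_qb (n k : ℕ) (t : ℝ) : bern n (k : ℤ) t = qb n k t := by
  unfold bern qb
  by_cases h : k ≤ n
  · simp [h]
  · simp [h, Nat.choose_eq_zero_of_lt (not_le.mp h)]

lemma qb_cont (n k : ℕ) : Continuous (qb n k) := by
  unfold qb; fun_prop

lemma qb_nonneg (n k : ℕ) {t : ℝ} (h : t ∈ Set.Icc (0:ℝ) 1) : 0 ≤ qb n k t := by
  unfold qb
  have h1 := h.1
  have h2 : 0 ≤ 1 - t := by linarith [h.2]
  positivity

lemma beta_rec (k j : ℕ) :
    ((k:ℝ) + 1) * ∫ t in (0:ℝ)..1, t ^ k * (1 - t) ^ (j + 1) =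
      ((j:ℝ) + 1) * ∫ t in (0:ℝ)..1, t ^ (k + 1) * (1 - t) ^ j := by
  have hd : ∀ t ∈ Set.uIcc (0:ℝ) 1, HasDerivAt (fun t : ℝ => t ^ (k + 1) * (1 - t) ^ (j + 1))
      (((k:ℝ) + 1) * (t ^ k * (1 - t) ^ (j + 1)) - ((j:ℝ) + 1) * (t ^ (k + 1) * (1 - t) ^ j)) t := by
    intro t _
    have h1 := hasDerivAt_pow (k + 1) t
    have h2 := ((hasDerivAt_id t).const_sub 1).pow (j + 1)
    have h3 := h1.mul h2
    refine h3.congr_deriv ?_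
    push_cast
    simp only [Nat.add_sub_cancel, Pi.pow_apply, id]
    ring
  have h := intervalIntegral.integral_eq_sub_of_hasDerivAt hd
    (Continuous.intervalIntegrable (by fun_prop) _ _)
  rw [intervalIntegral.integral_sub (Continuous.intervalIntegrable (by fun_prop) _ _)
    (Continuous.intervalIntegrable (by fun_prop) _ _),
    intervalIntegral.integral_const_mul, intervalIntegral.integral_const_mul] at h
  simp at h
  linarith

lemma beta_int (j : ℕ) : ∀ k : ℕ, ∫ t in (0:ℝ)..1, t ^ k * (1 - t) ^ j =
    (k.factorial : ℝ) * j.factorial / (k + j + 1).factorial := by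
  induction j with
  | zero =>
    intro k
    simp [Nat.factorial_succ]
    field_simp
  | succ j ih =>
    intro k
    have h := beta_rec k j
    rw [ih (k + 1)] at h
    have e : k + 1 + j + 1 = k + (j + 1) + 1 := by ring
    rw [e] at h
    have hk : ((k:ℝ) + 1) ≠ 0 := by positivity
    apply mul_left_cancel₀ hk
    rw [h, Nat.factorial_succ k, Nat.factorial_succ j]
    push_cast
    ring

lemma qb_moment (n k r : ℕ) (h : k ≤ n) :
    ((n:ℝ) + 1) * ∫ t in (0:ℝ)..1, qb n k t * t ^ r =
      ((k + r).factorial : ℝ) / k.factorial * ((n + 1).factorial / (n + r + 1).factorial) := by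
  obtain ⟨j, rfl⟩ := Nat.exists_eq_add_of_le h
  have e : ∀ t : ℝ, qb (k + j) k t * t ^ r = ((k + j).choose k : ℝ) * (t ^ (k + r) * (1 - t) ^ j) := by
    intro t
    unfold qb
    rw [Nat.add_sub_cancel_left, pow_add]
    ring
  simp_rw [e]
  rw [intervalIntegral.integral_const_mul, beta_int]
  have hc : ((k + j).choose k : ℝ) * k.factorial * j.factorial = (k + j).factorial := by
    rw [Nat.choose_symm_add]
    exact_mod_cast Nat.add_choose_mul_factorial_mul_factorial k j
  have e2 : k + r + j + 1 = k + j + r + 1 := by ring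
  rw [e2, Nat.factorial_succ (k + j), Nat.cast_mul, ← hc]
  have hk : (k.factorial : ℝ) ≠ 0 := by positivity
  have hn : ((k + j + r + 1).factorial : ℝ) ≠ 0 := by positivity
  field_simp
  push_cast
  ring

lemma qb_m0 (n k : ℕ) (h : k ≤ n) : ((n:ℝ) + 1) * ∫ t in (0:ℝ)..1, qb n k t = 1 := by
  have := qb_moment n k 0 h
  simp at this
  rw [this]
  field_simp

lemma qb_m1 (n k : ℕ) (h : k ≤ n) :
    ((n:ℝ) + 1) * ∫ t in (0:ℝ)..1, qb n k t * t = (k + 1) / (n + 2) := by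
  have := qb_moment n k 1 h
  simp only [pow_one] at this
  rw [this]
  simp only [Nat.factorial_succ, ← add_assoc]
  push_cast
  field_simp
  ring

lemma qb_m2 (n k : ℕ) (h : k ≤ n) :
    ((n:ℝ) + 1) * ∫ t in (0:ℝ)..1, qb n k t * t ^ 2 = (k + 1) * (k + 2) / ((n + 2) * (n + 3)) := by
  rw [qb_moment n k 2 h]
  simp only [Nat.factorial_succ, ← add_assoc]
  push_cast
  field_simp
  ring

lemma qb_m3 (n k : ℕ) (h : k ≤ n) :
    ((n:ℝ) + 1) * ∫ t in (0:ℝ)..1, qb n k t * t ^ 3 =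
      (k + 1) * (k + 2) * (k + 3) / ((n + 2) * (n + 3) * (n + 4)) := by
  rw [qb_moment n k 3 h]
  simp only [Nat.factorial_succ, ← add_assoc]
  push_cast
  field_simp
  ring

lemma qb_m4 (n k : ℕ) (h : k ≤ n) :
    ((n:ℝ) + 1) * ∫ t in (0:ℝ)..1, qb n k t * t ^ 4 =
      (k + 1) * (k + 2) * (k + 3) * (k + 4) / ((n + 2) * (n + 3) * (n + 4) * (n + 5)) := by
  rw [qb_moment n k 4 h]
  simp only [Nat.factorial_succ, ← add_assoc]
  push_cast
  field_simp
  ring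

lemma qb_c4 (n k : ℕ) (x : ℝ) (h : k ≤ n) :
    ((n:ℝ) + 1) * ∫ t in (0:ℝ)..1, qb n k t * (t - x) ^ 4 =
      ((k + 1) * (k + 2) * (k + 3) * (k + 4)
        - 4 * x * ((k + 1) * (k + 2) * (k + 3)) * (n + 5)
        + 6 * x ^ 2 * ((k + 1) * (k + 2)) * ((n + 4) * (n + 5))
        - 4 * x ^ 3 * (k + 1) * ((n + 3) * (n + 4) * (n + 5))
        + x ^ 4 * ((n + 2) * (n + 3) * (n + 4) * (n + 5)))
        / (((n:ℝ) + 2) * (n + 3) * (n + 4) * (n + 5)) := by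
  have hq := qb_cont n k
  have e : ∀ t : ℝ, qb n k t * (t - x) ^ 4 = qb n k t * t ^ 4 - (4 * x) * (qb n k t * t ^ 3)
      + (6 * x ^ 2) * (qb n k t * t ^ 2) - (4 * x ^ 3) * (qb n k t * t) + x ^ 4 * qb n k t := by
    intro t; ring
  simp_rw [e]
  have I : ∀ f : ℝ → ℝ, Continuous f → IntervalIntegrable f MeasureTheory.volume 0 1 :=
    fun f hf => hf.intervalIntegrable _ _
  rw [intervalIntegral.integral_add (I _ (by fun_prop)) (I _ (by fun_prop)),
    intervalIntegral.integral_sub (I _ (by fun_prop)) (I _ (by fun_prop)),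
    intervalIntegral.integral_add (I _ (by fun_prop)) (I _ (by fun_prop)),
    intervalIntegral.integral_sub (I _ (by fun_prop)) (I _ (by fun_prop))]
  simp only [intervalIntegral.integral_const_mul]
  have m0 := qb_m0 n k h
  have m1 := qb_m1 n k h
  have m2 := qb_m2 n k h
  have m3 := qb_m3 n k h
  have m4 := qb_m4 n k h
  have : ∀ a b c d e : ℝ, ((n:ℝ) + 1) * (a - 4 * x * b + 6 * x ^ 2 * c - 4 * x ^ 3 * d + x ^ 4 * e)
      = (n + 1) * a - 4 * x * ((n + 1) * b) + 6 * x ^ 2 * ((n + 1) * c)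
        - 4 * x ^ 3 * ((n + 1) * d) + x ^ 4 * ((n + 1) * e) := by intros; ring
  rw [this, m0, m1, m2, m3, m4]
  field_simp

/-- Expectation under the binomial weights. -/
noncomputable def Ex (x : ℝ) (m : ℕ) (f : ℕ → ℝ) : ℝ := ∑ k ∈ Finset.range (m + 1), qb m k x * f k

lemma Ex_add (x : ℝ) (m : ℕ) (f g : ℕ → ℝ) : Ex x m (fun k => f k + g k) = Ex x m f + Ex x m g := by
  simp [Ex, mul_add, Finset.sum_add_distrib]

lemma Ex_mul (x : ℝ) (m : ℕ) (c : ℝ) (f : ℕ → ℝ) : Ex x m (fun k => c * f k) = c * Ex x m f := by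
  simp only [Ex, Finset.mul_sum]
  exact Finset.sum_congr rfl fun _ _ => by ring

lemma Ex_congr (x : ℝ) (m : ℕ) (f g : ℕ → ℝ) (h : ∀ k ≤ m, f k = g k) : Ex x m f = Ex x m g := by
  exact Finset.sum_congr rfl fun k hk => by rw [h k (Nat.lt_succ_iff.mp (Finset.mem_range.mp hk))]

lemma Ex_mono {x : ℝ} (hx : x ∈ Set.Icc (0:ℝ) 1) (m : ℕ) (f g : ℕ → ℝ) (h : ∀ k ≤ m, f k ≤ g k) :
    Ex x m f ≤ Ex x m g := by
  exact Finset.sum_le_sum fun k hk => mul_le_mul_of_nonneg_left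
    (h k (Nat.lt_succ_iff.mp (Finset.mem_range.mp hk))) (qb_nonneg m k hx)

lemma Ex_abs {x : ℝ} (hx : x ∈ Set.Icc (0:ℝ) 1) (m : ℕ) (f : ℕ → ℝ) :
    |Ex x m f| ≤ Ex x m (fun k => |f k|) := by
  unfold Ex
  refine (Finset.abs_sum_le_sum_abs _ _).trans (Finset.sum_le_sum fun k _ => ?_)
  rw [abs_mul, abs_of_nonneg (qb_nonneg m k hx)]

lemma qb_zero_of_lt (m k : ℕ) (x : ℝ) (h : m < k) : qb m k x = 0 := by
  simp [qb, Nat.choose_eq_zero_of_lt h]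

lemma qb_succ_zero (m : ℕ) (x : ℝ) : qb (m + 1) 0 x = (1 - x) * qb m 0 x := by
  simp [qb, pow_succ]; ring

lemma qb_succ_succ (m k : ℕ) (x : ℝ) :
    qb (m + 1) (k + 1) x = (1 - x) * qb m (k + 1) x + x * qb m k x := by
  rcases lt_or_ge k m with h | h
  · obtain ⟨j, rfl⟩ := Nat.exists_eq_add_of_lt h
    unfold qb
    have e1 : k + j + 1 + 1 - (k + 1) = j + 1 := by omega
    have e2 : k + j + 1 - (k + 1) = j := by omega
    have e3 : k + j + 1 - k = j + 1 := by omega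
    rw [e1, e2, e3, Nat.choose_succ_succ]
    push_cast
    ring
  · rw [qb_zero_of_lt m (k + 1) x (by omega)]
    unfold qb
    rw [Nat.choose_succ_succ, Nat.choose_eq_zero_of_lt (show m < k + 1 by omega)]
    have e : m + 1 - (k + 1) = m - k := by omega
    rw [e]; push_cast; ring

lemma Ex_succ (x : ℝ) (m : ℕ) (f : ℕ → ℝ) :
    Ex x (m + 1) f = (1 - x) * Ex x m f + x * Ex x m (fun k => f (k + 1)) := by
  unfold Ex
  have h : ∑ k ∈ Finset.range (m + 1), qb m k x * f k =
      ∑ k ∈ Finset.range (m + 1), qb m (k + 1) x * f (k + 1) + qb m 0 x * f 0 := by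
    rw [← Finset.sum_range_succ' (fun k => qb m k x * f k), Finset.sum_range_succ _ (m + 1),
      qb_zero_of_lt m (m + 1) x (by omega)]
    ring
  rw [Finset.sum_range_succ' _ (m + 1), h]
  simp only [qb_succ_succ, qb_succ_zero, add_mul, Finset.sum_add_distrib, mul_assoc,
    ← Finset.mul_sum]
  ring

lemma Ex_0 (x : ℝ) (m : ℕ) : Ex x m (fun _ => 1) = 1 := by
  induction m with
  | zero => simp [Ex, qb]
  | succ m ih => rw [Ex_succ, ih]; ring

lemma Ex_1 (x : ℝ) (m : ℕ) : Ex x m (fun k => (k:ℝ)) = m * x := by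
  induction m with
  | zero => simp [Ex, qb]
  | succ m ih =>
    rw [Ex_succ]
    simp only [Nat.cast_add, Nat.cast_one, Ex_add, ih, Ex_0]
    ring

lemma Ex_2 (x : ℝ) (m : ℕ) : Ex x m (fun k => (k:ℝ) ^ 2) = m * x + m * (m - 1) * x ^ 2 := by
  induction m with
  | zero => simp [Ex, qb]
  | succ m ih =>
    rw [Ex_succ]
    have e : ∀ k : ℕ, ((k + 1 : ℕ) : ℝ) ^ 2 = (k:ℝ) ^ 2 + (2 * (k:ℝ) + 1) := by
      intro k; push_cast; ring
    simp only [e, Ex_add, Ex_mul, ih, Ex_0, Ex_1]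
    push_cast
    ring

lemma Ex_3 (x : ℝ) (m : ℕ) : Ex x m (fun k => (k:ℝ) ^ 3) =
    m * x + 3 * (m * (m - 1)) * x ^ 2 + m * (m - 1) * (m - 2) * x ^ 3 := by
  induction m with
  | zero => simp [Ex, qb]
  | succ m ih =>
    rw [Ex_succ]
    have e : ∀ k : ℕ, ((k + 1 : ℕ) : ℝ) ^ 3 = (k:ℝ) ^ 3 + (3 * (k:ℝ) ^ 2 + (3 * (k:ℝ) + 1)) := by
      intro k; push_cast; ring
    simp only [e, Ex_add, Ex_mul, ih, Ex_0, Ex_1, Ex_2]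
    push_cast
    ring

lemma Ex_4 (x : ℝ) (m : ℕ) : Ex x m (fun k => (k:ℝ) ^ 4) =
    m * x + 7 * (m * (m - 1)) * x ^ 2 + 6 * (m * (m - 1) * (m - 2)) * x ^ 3
      + m * (m - 1) * (m - 2) * (m - 3) * x ^ 4 := by
  induction m with
  | zero => simp [Ex, qb]
  | succ m ih =>
    rw [Ex_succ]
    have e : ∀ k : ℕ, ((k + 1 : ℕ) : ℝ) ^ 4 =
        (k:ℝ) ^ 4 + (4 * (k:ℝ) ^ 3 + (6 * (k:ℝ) ^ 2 + (4 * (k:ℝ) + 1))) := by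
      intro k; push_cast; ring
    simp only [e, Ex_add, Ex_mul, ih, Ex_0, Ex_1, Ex_2, Ex_3]
    push_cast
    ring

lemma Ex_poly (x : ℝ) (m : ℕ) (a b c d e : ℝ) :
    Ex x m (fun k => a * (k:ℝ) ^ 4 + (b * (k:ℝ) ^ 3 + (c * (k:ℝ) ^ 2 + (d * (k:ℝ) + e * 1)))) =
    a * (m * x + 7 * (m * (m - 1)) * x ^ 2 + 6 * (m * (m - 1) * (m - 2)) * x ^ 3
      + m * (m - 1) * (m - 2) * (m - 3) * x ^ 4) +
    b * (m * x + 3 * (m * (m - 1)) * x ^ 2 + m * (m - 1) * (m - 2) * x ^ 3) +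
    c * (m * x + m * (m - 1) * x ^ 2) + d * (m * x) + e := by
  rw [Ex_add, Ex_mul, Ex_4, Ex_add, Ex_mul, Ex_3, Ex_add, Ex_mul, Ex_2, Ex_add, Ex_mul, Ex_1,
    Ex_mul, Ex_0]
  ring

lemma c4_frac (m : ℕ) (N : ℝ) (h : N ≤ 2000 * ((m:ℝ) + 1) ^ 2) :
    1 / (((m:ℝ) + 1 + 2) * (m + 1 + 3) * (m + 1 + 4) * (m + 1 + 5)) * N
      ≤ 2000 / ((m:ℝ) + 1) ^ 2 := by
  have hm : (0:ℝ) ≤ m := by positivity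
  rw [one_div_mul_eq_div, div_le_div_iff₀ (by positivity) (by positivity)]
  calc N * ((m:ℝ) + 1) ^ 2 ≤ 2000 * ((m:ℝ) + 1) ^ 2 * ((m:ℝ) + 1) ^ 2 := by gcongr
    _ = 2000 * (((m:ℝ) + 1) * (m + 1) * (m + 1) * (m + 1)) := by ring
    _ ≤ _ := by gcongr <;> linarith

lemma poly_bd0 (m : ℕ) {x : ℝ} (hx : x ∈ Set.Icc (0:ℝ) 1) :
    (24 - 144 * x + 360 * x ^ 2 - 480 * x ^ 3 + 360 * x ^ 4)
      + (72 * x - 372 * x ^ 2 + 672 * x ^ 3 - 372 * x ^ 4) * m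
      + (12 * x ^ 2 - 24 * x ^ 3 + 12 * x ^ 4) * m ^ 2 ≤ 2000 * ((m:ℝ) + 1) ^ 2 := by
  have hm : (0:ℝ) ≤ m := by positivity
  have p1 := hx.1
  have l1 := hx.2
  have p2 : 0 ≤ x ^ 2 := by positivity
  have p3 : 0 ≤ x ^ 3 := by positivity
  have p4 : 0 ≤ x ^ 4 := by positivity
  have l2 : x ^ 2 ≤ 1 := pow_le_one₀ p1 l1
  have l3 : x ^ 3 ≤ 1 := pow_le_one₀ p1 l1
  have l4 : x ^ 4 ≤ 1 := pow_le_one₀ p1 l1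
  have a0 : 24 - 144 * x + 360 * x ^ 2 - 480 * x ^ 3 + 360 * x ^ 4 ≤ 2000 := by linarith
  have a1 : 72 * x - 372 * x ^ 2 + 672 * x ^ 3 - 372 * x ^ 4 ≤ 2000 := by linarith
  have a2 : 12 * x ^ 2 - 24 * x ^ 3 + 12 * x ^ 4 ≤ 2000 := by linarith
  have b1 := mul_le_mul_of_nonneg_right a1 hm
  have b2 := mul_le_mul_of_nonneg_right a2 (sq_nonneg (m:ℝ))
  nlinarith

lemma poly_bd1 (m : ℕ) {x : ℝ} (hx : x ∈ Set.Icc (0:ℝ) 1) :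
    (120 - 576 * x + 1080 * x ^ 2 - 960 * x ^ 3 + 360 * x ^ 4)
      + (144 * x - 588 * x ^ 2 + 816 * x ^ 3 - 372 * x ^ 4) * m
      + (12 * x ^ 2 - 24 * x ^ 3 + 12 * x ^ 4) * m ^ 2 ≤ 2000 * ((m:ℝ) + 1) ^ 2 := by
  have hm : (0:ℝ) ≤ m := by positivity
  have p1 := hx.1
  have l1 := hx.2
  have p2 : 0 ≤ x ^ 2 := by positivity
  have p3 : 0 ≤ x ^ 3 := by positivity
  have p4 : 0 ≤ x ^ 4 := by positivity
  have l2 : x ^ 2 ≤ 1 := pow_le_one₀ p1 l1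
  have l3 : x ^ 3 ≤ 1 := pow_le_one₀ p1 l1
  have l4 : x ^ 4 ≤ 1 := pow_le_one₀ p1 l1
  have a0 : 120 - 576 * x + 1080 * x ^ 2 - 960 * x ^ 3 + 360 * x ^ 4 ≤ 2000 := by linarith
  have a1 : 144 * x - 588 * x ^ 2 + 816 * x ^ 3 - 372 * x ^ 4 ≤ 2000 := by linarith
  have a2 : 12 * x ^ 2 - 24 * x ^ 3 + 12 * x ^ 4 ≤ 2000 := by linarith
  have b1 := mul_le_mul_of_nonneg_right a1 hm
  have b2 := mul_le_mul_of_nonneg_right a2 (sq_nonneg (m:ℝ))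
  nlinarith

lemma Ex_c4_0 (m : ℕ) {x : ℝ} (hx : x ∈ Set.Icc (0:ℝ) 1) :
    Ex x m (fun k => ((m:ℝ) + 1 + 1) * ∫ t in (0:ℝ)..1, qb (m + 1) k t * (t - x) ^ 4)
      ≤ 2000 / ((m:ℝ) + 1) ^ 2 := by
  set n : ℝ := (m:ℝ) + 1 with hn
  rw [Ex_congr x m _ (fun k => 1 / ((n + 2) * (n + 3) * (n + 4) * (n + 5)) *
    (1 * (k:ℝ) ^ 4 + ((10 - 4 * x * (n + 5)) * (k:ℝ) ^ 3 +
     ((35 - 24 * x * (n + 5) + 6 * x ^ 2 * ((n + 4) * (n + 5))) * (k:ℝ) ^ 2 +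
     ((50 - 44 * x * (n + 5) + 18 * x ^ 2 * ((n + 4) * (n + 5))
        - 4 * x ^ 3 * ((n + 3) * (n + 4) * (n + 5))) * (k:ℝ) +
     (24 - 24 * x * (n + 5) + 12 * x ^ 2 * ((n + 4) * (n + 5))
        - 4 * x ^ 3 * ((n + 3) * (n + 4) * (n + 5))
        + x ^ 4 * ((n + 2) * (n + 3) * (n + 4) * (n + 5))) * 1))))), Ex_mul, Ex_poly]
  · refine c4_frac m _ (le_of_eq_of_le ?_ (poly_bd0 m hx))
    rw [hn]; ring
  · intro k hk
    have := qb_c4 (m + 1) k x (by omega)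
    push_cast at this
    rw [← hn] at this
    rw [this, div_eq_mul_one_div, mul_comm]
    congr 1
    ring

lemma Ex_c4_1 (m : ℕ) {x : ℝ} (hx : x ∈ Set.Icc (0:ℝ) 1) :
    Ex x m (fun k => ((m:ℝ) + 1 + 1) * ∫ t in (0:ℝ)..1, qb (m + 1) (k + 1) t * (t - x) ^ 4)
      ≤ 2000 / ((m:ℝ) + 1) ^ 2 := by
  set n : ℝ := (m:ℝ) + 1 with hn
  rw [Ex_congr x m _ (fun k => 1 / ((n + 2) * (n + 3) * (n + 4) * (n + 5)) *
    (1 * (k:ℝ) ^ 4 + ((14 - 4 * x * (n + 5)) * (k:ℝ) ^ 3 +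
     ((71 - 36 * x * (n + 5) + 6 * x ^ 2 * ((n + 4) * (n + 5))) * (k:ℝ) ^ 2 +
     ((154 - 104 * x * (n + 5) + 30 * x ^ 2 * ((n + 4) * (n + 5))
        - 4 * x ^ 3 * ((n + 3) * (n + 4) * (n + 5))) * (k:ℝ) +
     (120 - 96 * x * (n + 5) + 36 * x ^ 2 * ((n + 4) * (n + 5))
        - 8 * x ^ 3 * ((n + 3) * (n + 4) * (n + 5))
        + x ^ 4 * ((n + 2) * (n + 3) * (n + 4) * (n + 5))) * 1))))), Ex_mul, Ex_poly]
  · refine c4_frac m _ (le_of_eq_of_le ?_ (poly_bd1 m hx))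
    rw [hn]; ring
  · intro k hk
    have := qb_c4 (m + 1) (k + 1) x (by omega)
    push_cast at this
    rw [← hn] at this
    rw [this, div_eq_mul_one_div, mul_comm]
    congr 1
    ring

/-- Scaled Durrmeyer functional. -/
noncomputable def Jf (n : ℕ) (f : ℝ → ℝ) (k : ℕ) : ℝ :=
  ((n:ℝ) + 1) * ∫ t in (0:ℝ)..1, qb n k t * f t

lemma DM1_eq (m : ℕ) (f : ℝ → ℝ) (x : ℝ) :
    DM1 (fun _ => 2) (fun _ => -3) (m + 1) f x =
      (2 - 3 * x) * Ex x m (Jf (m + 1) f)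
        + (3 * x - 1) * Ex x m (fun k => Jf (m + 1) f (k + 1)) := by
  unfold DM1
  have e1 : ∑ k ∈ Finset.range (m + 1 + 1), pM1 (fun _ => 2) (fun _ => -3) (m + 1) k x *
        ∫ t in (0:ℝ)..1, bern (m + 1) k t * f t =
      ∑ k ∈ Finset.range (m + 1 + 1), ((2 - 3 * x) * (qb m k x *
        ∫ t in (0:ℝ)..1, qb (m + 1) k t * f t) + (3 * x - 1) * (bern m ((k:ℤ) - 1) x *
        ∫ t in (0:ℝ)..1, qb (m + 1) k t * f t)) := by
    refine Finset.sum_congr rfl fun k _ => ?_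
    simp only [pM1, bern_eq_qb, Nat.add_sub_cancel]
    ring
  rw [e1, Finset.sum_add_distrib, ← Finset.mul_sum, ← Finset.mul_sum,
    Finset.sum_range_succ _ (m + 1), Finset.sum_range_succ' _ (m + 1),
    qb_zero_of_lt m (m + 1) x (by omega)]
  have e2 : bern m (((0:ℕ):ℤ) - 1) x = 0 := by simp [bern]
  have e3 : ∀ k : ℕ, bern m (((k + 1 : ℕ):ℤ) - 1) x = qb m k x := by
    intro k
    rw [← bern_eq_qb]; congr 1; push_cast; ring
  simp only [e2, e3]
  have e4 : ∀ F : ℕ → ℝ, ∑ k ∈ Finset.range (m + 1), qb m k x * F k = Ex x m F := fun F => rfl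
  rw [e4 (fun k => ∫ t in (0:ℝ)..1, qb (m + 1) k t * f t),
    e4 (fun k => ∫ t in (0:ℝ)..1, qb (m + 1) (k + 1) t * f t)]
  have e5 : Ex x m (Jf (m + 1) f) = (((m + 1 : ℕ):ℝ) + 1) *
    Ex x m (fun k => ∫ t in (0:ℝ)..1, qb (m + 1) k t * f t) := (Ex_mul _ _ _ _)
  have e6 : Ex x m (fun k => Jf (m + 1) f (k + 1)) = (((m + 1 : ℕ):ℝ) + 1) *
    Ex x m (fun k => ∫ t in (0:ℝ)..1, qb (m + 1) (k + 1) t * f t) := (Ex_mul _ _ _ _)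
  rw [e5, e6]
  ring

lemma Jf_add (n k : ℕ) (f g : ℝ → ℝ) (hf : ContinuousOn f (Set.Icc 0 1))
    (hg : ContinuousOn g (Set.Icc 0 1)) :
    Jf n (fun t => f t + g t) k = Jf n f k + Jf n g k := by
  unfold Jf
  have I : ∀ f : ℝ → ℝ, ContinuousOn f (Set.Icc 0 1) →
      IntervalIntegrable (fun t => qb n k t * f t) MeasureTheory.volume 0 1 := by
    intro f hf
    apply ContinuousOn.intervalIntegrable
    rw [Set.uIcc_of_le zero_le_one]
    exact (qb_cont n k).continuousOn.mul hf
  simp only [mul_add]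
  rw [intervalIntegral.integral_add (I f hf) (I g hg)]
  ring

lemma Jf_mul (n k : ℕ) (c : ℝ) (f : ℝ → ℝ) : Jf n (fun t => c * f t) k = c * Jf n f k := by
  unfold Jf
  have : ∀ t, qb n k t * (c * f t) = c * (qb n k t * f t) := fun t => by ring
  simp only [this, intervalIntegral.integral_const_mul]
  ring

lemma Jf_mono (n k : ℕ) (f g : ℝ → ℝ) (hf : ContinuousOn f (Set.Icc 0 1))
    (hg : ContinuousOn g (Set.Icc 0 1)) (h : ∀ t ∈ Set.Icc (0:ℝ) 1, f t ≤ g t) :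
    Jf n f k ≤ Jf n g k := by
  unfold Jf
  have I : ∀ f : ℝ → ℝ, ContinuousOn f (Set.Icc 0 1) →
      IntervalIntegrable (fun t => qb n k t * f t) MeasureTheory.volume 0 1 := by
    intro f hf
    apply ContinuousOn.intervalIntegrable
    rw [Set.uIcc_of_le zero_le_one]
    exact (qb_cont n k).continuousOn.mul hf
  apply mul_le_mul_of_nonneg_left _ (by positivity)
  exact intervalIntegral.integral_mono_on zero_le_one (I f hf) (I g hg)
    fun t ht => mul_le_mul_of_nonneg_left (h t ht) (qb_nonneg n k ht)

lemma DM1_add (m : ℕ) (x : ℝ) (f g : ℝ → ℝ) (hf : ContinuousOn f (Set.Icc 0 1))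
    (hg : ContinuousOn g (Set.Icc 0 1)) :
    DM1 (fun _ => 2) (fun _ => -3) (m + 1) (fun t => f t + g t) x =
    DM1 (fun _ => 2) (fun _ => -3) (m + 1) f x + DM1 (fun _ => 2) (fun _ => -3) (m + 1) g x := by
  simp only [DM1_eq]
  have h := fun k => Jf_add (m + 1) k f g hf hg
  rw [Ex_congr x m _ (fun k => Jf (m + 1) f k + Jf (m + 1) g k) (fun k _ => h k),
    Ex_congr x m (fun k => Jf (m + 1) (fun t => f t + g t) (k + 1))
      (fun k => Jf (m + 1) f (k + 1) + Jf (m + 1) g (k + 1)) (fun k _ => h (k + 1)), Ex_add, Ex_add]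
  ring

lemma DM1_mul (m : ℕ) (x c : ℝ) (f : ℝ → ℝ) :
    DM1 (fun _ => 2) (fun _ => -3) (m + 1) (fun t => c * f t) x =
    c * DM1 (fun _ => 2) (fun _ => -3) (m + 1) f x := by
  simp only [DM1_eq]
  have h := fun k => Jf_mul (m + 1) k c f
  rw [Ex_congr x m _ (fun k => c * Jf (m + 1) f k) (fun k _ => h k),
    Ex_congr x m (fun k => Jf (m + 1) (fun t => c * f t) (k + 1))
      (fun k => c * Jf (m + 1) f (k + 1)) (fun k _ => h (k + 1)), Ex_mul, Ex_mul]
  ring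

lemma Jf_one (n k : ℕ) (h : k ≤ n) : Jf n (fun _ => 1) k = 1 := by
  have := qb_m0 n k h
  simpa [Jf] using this

lemma DM1_one (m : ℕ) (x : ℝ) : DM1 (fun _ => 2) (fun _ => -3) (m + 1) (fun _ => 1) x = 1 := by
  rw [DM1_eq, Ex_congr x m _ (fun _ => 1) (fun k hk => Jf_one _ _ (by omega)),
    Ex_congr x m _ (fun _ => 1) (fun k hk => Jf_one (m + 1) (k + 1) (by omega)), Ex_0]
  ring

lemma DM1_id (m : ℕ) (x : ℝ) : DM1 (fun _ => 2) (fun _ => -3) (m + 1) (fun t => t) x = x := by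
  have h : ∀ k, k ≤ m + 1 → Jf (m + 1) (fun t => t) k = 1 / ((m:ℝ) + 3) * ((k:ℝ) + 1) := by
    intro k hk
    have := qb_m1 (m + 1) k hk
    unfold Jf
    rw [this]; push_cast
    rw [show (m:ℝ) + 1 + 2 = m + 3 by ring]
    ring
  rw [DM1_eq, Ex_congr x m _ (fun k => 1 / ((m:ℝ) + 3) * ((k:ℝ) + 1)) (fun k hk => h k (by omega)),
    Ex_congr x m (fun k => Jf (m + 1) (fun t => t) (k + 1))
      (fun k => 1 / ((m:ℝ) + 3) * ((k:ℝ) + 2 * 1)) (fun k hk => by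
        rw [h (k + 1) (by omega)]; push_cast; ring), Ex_mul, Ex_mul, Ex_add, Ex_add, Ex_mul, Ex_0, Ex_1]
  field_simp
  ring

lemma omega_bdd {h : ℝ → ℝ} (hc : ContinuousOn h (Set.Icc 0 1)) (δ : ℝ) :
    BddAbove {v | ∃ t ∈ Set.Icc (0:ℝ) 1, ∃ s ∈ Set.Icc (0:ℝ) 1, |t - s| ≤ δ ∧ v = |h t - h s|} := by
  obtain ⟨M, hM⟩ := isCompact_Icc.exists_bound_of_continuousOn hc
  refine ⟨M + M, ?_⟩
  rintro v ⟨t, ht, s, hs, -, rfl⟩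
  have h1 := hM t ht
  have h2 := hM s hs
  rw [Real.norm_eq_abs] at h1 h2
  exact (abs_sub _ _).trans (add_le_add h1 h2)

lemma omega_le {h : ℝ → ℝ} (hc : ContinuousOn h (Set.Icc 0 1)) {δ t s : ℝ}
    (ht : t ∈ Set.Icc (0:ℝ) 1) (hs : s ∈ Set.Icc (0:ℝ) 1) (hd : |t - s| ≤ δ) :
    |h t - h s| ≤ omega1 h δ :=
  le_csSup (omega_bdd hc δ) ⟨t, ht, s, hs, hd, rfl⟩

lemma omega_nonneg {h : ℝ → ℝ} (hc : ContinuousOn h (Set.Icc 0 1)) {δ : ℝ} (hδ : 0 ≤ δ) :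
    0 ≤ omega1 h δ :=
  (abs_nonneg _).trans (omega_le hc (t := 0) (s := 0) (by simp) (by simp) (by simpa using hδ))

lemma omega_steps {h : ℝ → ℝ} (hc : ContinuousOn h (Set.Icc 0 1)) {δ : ℝ} (hδ : 0 ≤ δ) (N : ℕ) :
    ∀ t ∈ Set.Icc (0:ℝ) 1, ∀ s ∈ Set.Icc (0:ℝ) 1, |t - s| ≤ N * δ →
      |h t - h s| ≤ N * omega1 h δ := by
  induction N with
  | zero =>
    intro t _ s _ hd
    have : t = s := by
      have : |t - s| ≤ 0 := by simpa using hd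
      linarith [abs_nonpos_iff.mp this]
    simp [this]
  | succ N ih =>
    intro t ht s hs hd
    push_cast at hd
    have hN : (0:ℝ) < N + 1 := by positivity
    set u := s + (t - s) * (N / (N + 1)) with hu
    have hr1 : (N:ℝ) / (N + 1) ≤ 1 := by rw [div_le_one hN]; linarith
    have hr0 : (0:ℝ) ≤ (N:ℝ) / (N + 1) := by positivity
    have hum : u ∈ Set.Icc (0:ℝ) 1 := by
      have e : u = (1 - (N:ℝ) / (N + 1)) * s + ((N:ℝ) / (N + 1)) * t := by rw [hu]; ring
      rw [e]
      exact convex_Icc (0:ℝ) 1 hs ht (by linarith) hr0 (by ring)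
    have h1 : |u - s| ≤ N * δ := by
      have e : u - s = (t - s) * (N / (N + 1)) := by rw [hu]; ring
      rw [e, abs_mul, abs_of_nonneg hr0]
      calc |t - s| * ((N:ℝ) / (N + 1)) ≤ ((N + 1) * δ) * ((N:ℝ) / (N + 1)) := by gcongr
        _ = N * δ := by field_simp
    have h2 : |t - u| ≤ δ := by
      have e : t - u = (t - s) * (1 / (N + 1)) := by rw [hu]; field_simp; ring
      rw [e, abs_mul, abs_of_nonneg (show (0:ℝ) ≤ 1 / (N + 1) by positivity)]
      calc |t - s| * (1 / ((N:ℝ) + 1)) ≤ ((N + 1) * δ) * (1 / ((N:ℝ) + 1)) := by gcongr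
        _ = δ := by field_simp
    have h3 := ih u hum s hs h1
    have h4 := omega_le hc ht hum h2
    have h5 := abs_sub_le (h t) (h u) (h s)
    push_cast
    linarith

lemma omega_sq {h : ℝ → ℝ} (hc : ContinuousOn h (Set.Icc 0 1)) (n : ℕ) (hn : 1 ≤ n) {t s : ℝ}
    (ht : t ∈ Set.Icc (0:ℝ) 1) (hs : s ∈ Set.Icc (0:ℝ) 1) :
    |h t - h s| ≤ (2 + n * (t - s) ^ 2) * omega1 h (1 / Real.sqrt n) := by
  have hn' : (0:ℝ) < n := by exact_mod_cast hn
  have hs0 : 0 < Real.sqrt n := Real.sqrt_pos.mpr hn'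
  have h1 := omega_steps hc (δ := 1 / Real.sqrt n) (by positivity) ⌈|t - s| * Real.sqrt n⌉₊ t ht s hs
    (by
      have := Nat.le_ceil (|t - s| * Real.sqrt n)
      rw [mul_one_div, le_div_iff₀ hs0]
      exact this)
  refine h1.trans (mul_le_mul_of_nonneg_right ?_ (omega_nonneg hc (by positivity)))
  have h2 := Nat.ceil_lt_add_one (show 0 ≤ |t - s| * Real.sqrt n by positivity)
  have h3 : (|t - s| * Real.sqrt n) ^ 2 = n * (t - s) ^ 2 := by
    rw [mul_pow, sq_abs, Real.sq_sqrt hn'.le]; ring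
  nlinarith [sq_nonneg (|t - s| * Real.sqrt n - 1)]

lemma taylor_bd {g g' g'' : ℝ → ℝ}
    (h1 : ∀ y ∈ Set.Icc (0:ℝ) 1, HasDerivWithinAt g (g' y) (Set.Icc 0 1) y)
    (h2 : ∀ y ∈ Set.Icc (0:ℝ) 1, HasDerivWithinAt g' (g'' y) (Set.Icc 0 1) y)
    (hc : ContinuousOn g'' (Set.Icc 0 1)) (n : ℕ) (hn : 1 ≤ n) {t x : ℝ}
    (ht : t ∈ Set.Icc (0:ℝ) 1) (hx : x ∈ Set.Icc (0:ℝ) 1) :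
    |g t - g x - g' x * (t - x) - 1 / 2 * g'' x * (t - x) ^ 2| ≤
      (2 + n * (t - x) ^ 2) * omega1 g'' (1 / Real.sqrt n) * (t - x) ^ 2 := by
  set W := omega1 g'' (1 / Real.sqrt n)
  have hW : 0 ≤ W := omega_nonneg hc (by positivity)
  set K := (2 + n * (t - x) ^ 2) * W
  have hK : 0 ≤ K := by positivity
  have hsub : Set.uIcc x t ⊆ Set.Icc 0 1 := Set.uIcc_subset_Icc hx ht
  have hsx : ∀ s ∈ Set.uIcc x t, |s - x| ≤ |t - x| := fun s hs => Set.abs_sub_left_of_mem_uIcc hs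
  have b2 : ∀ s ∈ Set.uIcc x t, |g'' s - g'' x| ≤ K := by
    intro s hs
    refine (omega_sq hc n hn (hsub hs) hx).trans ?_
    have := sq_le_sq.mpr (hsx s hs)
    apply mul_le_mul_of_nonneg_right _ hW
    gcongr
  have b1 : ∀ s ∈ Set.uIcc x t, |g' s - g' x - g'' x * (s - x)| ≤ K * |t - x| := by
    intro s hs
    have := Convex.norm_image_sub_le_of_norm_hasDerivWithin_le
      (f := fun s => g' s - g'' x * (s - x)) (f' := fun s => g'' s - g'' x * 1) (C := K)
      (s := Set.uIcc x t) (x := x) (y := s)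
      (fun y hy => ((h2 y (hsub hy)).mono hsub).sub
        (((hasDerivWithinAt_id y _).sub_const x).const_mul (g'' x)))
      (fun y hy => by simpa using b2 y hy) (convex_uIcc x t) Set.left_mem_uIcc hs
    simp only [Real.norm_eq_abs] at this
    have e : g' s - g'' x * (s - x) - (g' x - g'' x * (x - x)) = g' s - g' x - g'' x * (s - x) := by
      ring
    rw [e] at this
    exact this.trans (mul_le_mul_of_nonneg_left (hsx s hs) hK)
  have := Convex.norm_image_sub_le_of_norm_hasDerivWithin_le
      (f := fun s => g s - g' x * (s - x) - 1 / 2 * g'' x * (s - x) ^ 2)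
      (f' := fun s => g' s - g' x * 1 - 1 / 2 * g'' x * (2 * (s - x) ^ (2 - 1) * 1)) (C := K * |t - x|)
      (s := Set.uIcc x t) (x := x) (y := t)
      (fun y hy => (((h1 y (hsub hy)).mono hsub).sub
        (((hasDerivWithinAt_id y _).sub_const x).const_mul (g' x))).sub
        ((((hasDerivWithinAt_id y _).sub_const x).pow 2).const_mul (1 / 2 * g'' x)))
      (fun y hy => by
        have := b1 y hy
        rw [Real.norm_eq_abs]
        convert this using 2
        norm_num
        ring) (convex_uIcc x t) Set.left_mem_uIcc Set.right_mem_uIcc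
  simp only [Real.norm_eq_abs] at this
  have e : g t - g' x * (t - x) - 1 / 2 * g'' x * (t - x) ^ 2 -
      (g x - g' x * (x - x) - 1 / 2 * g'' x * (x - x) ^ 2) =
      g t - g x - g' x * (t - x) - 1 / 2 * g'' x * (t - x) ^ 2 := by ring
  rw [e] at this
  refine this.trans (le_of_eq ?_)
  rw [mul_assoc, ← sq, sq_abs]

lemma DM1_bd (m : ℕ) {x : ℝ} (hx : x ∈ Set.Icc (0:ℝ) 1) (R : ℝ → ℝ) (W : ℝ) (hW : 0 ≤ W)
    (hR : ContinuousOn R (Set.Icc 0 1))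
    (hb : ∀ t ∈ Set.Icc (0:ℝ) 1, |R t| ≤ W * (1 / ((m:ℝ) + 1)) * 1 + W * (2 * (m + 1)) * (t - x) ^ 4) :
    |DM1 (fun _ => 2) (fun _ => -3) (m + 1) R x| ≤ 16004 * (1 / ((m:ℝ) + 1)) * W := by
  set c := W * (1 / ((m:ℝ) + 1))
  set d := W * (2 * ((m:ℝ) + 1))
  have hd : 0 ≤ d := by positivity
  have key : ∀ k ≤ m + 1, |Jf (m + 1) R k| ≤ c * 1 + d * Jf (m + 1) (fun t => (t - x) ^ 4) k := by
    intro k hk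
    have hG : Jf (m + 1) (fun t => c * 1 + d * (t - x) ^ 4) k =
        c * 1 + d * Jf (m + 1) (fun t => (t - x) ^ 4) k := by
      rw [Jf_add _ _ (fun t => c * 1) (fun t => d * (t - x) ^ 4) (by fun_prop) (by fun_prop),
        Jf_mul _ _ d, Jf_mul _ _ c (fun _ => 1), Jf_one _ _ hk]
    rw [← hG, abs_le]
    constructor
    · have := Jf_mono (m + 1) k (fun t => (-1) * R t) (fun t => c * 1 + d * (t - x) ^ 4)
        (by fun_prop) (by fun_prop) (fun t ht => by
          have := (abs_le.mp (hb t ht)).1; linarith)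
      rw [Jf_mul] at this
      linarith
    · exact Jf_mono (m + 1) k R _ hR (by fun_prop) (fun t ht => (abs_le.mp (hb t ht)).2)
  have B : c * 1 + d * (2000 / ((m:ℝ) + 1) ^ 2) = 4001 * (1 / ((m:ℝ) + 1)) * W := by
    simp only [c, d]; field_simp; ring
  have A0 : |Ex x m (Jf (m + 1) R)| ≤ 4001 * (1 / ((m:ℝ) + 1)) * W := by
    refine (Ex_abs hx _ _).trans ((Ex_mono hx m _ _ (fun k hk => key k (by omega))).trans ?_)
    rw [Ex_add, Ex_mul, Ex_mul, Ex_0, ← B]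
    have := Ex_c4_0 m hx
    have e : Ex x m (Jf (m + 1) fun t => (t - x) ^ 4) ≤ 2000 / ((m:ℝ) + 1) ^ 2 := by
      unfold Jf; push_cast; exact this
    gcongr
  have A1 : |Ex x m (fun k => Jf (m + 1) R (k + 1))| ≤ 4001 * (1 / ((m:ℝ) + 1)) * W := by
    refine (Ex_abs hx _ _).trans ((Ex_mono hx m _ _ (fun k hk => key (k + 1) (by omega))).trans ?_)
    rw [Ex_add, Ex_mul, Ex_mul, Ex_0, ← B]
    have := Ex_c4_1 m hx
    have e : Ex x m (fun k => Jf (m + 1) (fun t => (t - x) ^ 4) (k + 1))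
        ≤ 2000 / ((m:ℝ) + 1) ^ 2 := by
      unfold Jf; push_cast; exact this
    gcongr
  rw [DM1_eq]
  have a0 : |2 - 3 * x| ≤ 2 := abs_le.mpr ⟨by linarith [hx.2], by linarith [hx.1]⟩
  have a1 : |3 * x - 1| ≤ 2 := abs_le.mpr ⟨by linarith [hx.1], by linarith [hx.2]⟩
  refine (abs_add_le _ _).trans ?_
  rw [abs_mul, abs_mul]
  have := mul_le_mul a0 A0 (abs_nonneg _) (by norm_num)
  have := mul_le_mul a1 A1 (abs_nonneg _) (by norm_num)
  linarith

theorem DM1_quantitative_voronovskaja :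
    ∃ C > (0:ℝ), ∀ g g' g'' : ℝ → ℝ,
      (∀ y ∈ Set.Icc (0:ℝ) 1, HasDerivWithinAt g (g' y) (Set.Icc 0 1) y) →
      (∀ y ∈ Set.Icc (0:ℝ) 1, HasDerivWithinAt g' (g'' y) (Set.Icc 0 1) y) →
      ContinuousOn g'' (Set.Icc 0 1) →
      ∀ n : ℕ, 1 ≤ n → ∀ x ∈ Set.Icc (0:ℝ) 1,
        |DM1 (fun _ => 2) (fun _ => -3) n g x - g x
            - 1 / 2 * DM1 (fun _ => 2) (fun _ => -3) n (fun t => (t - x) ^ 2) x * g'' x|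
          ≤ C * (1 / (n : ℝ)) * omega1 g'' (1 / Real.sqrt n) := by
  refine ⟨16004, by norm_num, ?_⟩
  intro g g' g'' h1 h2 hc n hn x hx
  obtain ⟨m, rfl⟩ : ∃ m, n = m + 1 := ⟨n - 1, by omega⟩
  have hg : ContinuousOn g (Set.Icc 0 1) := fun y hy => (h1 y hy).continuousWithinAt
  have hW : 0 ≤ omega1 g'' (1 / Real.sqrt (m + 1 : ℕ)) := omega_nonneg hc (by positivity)
  set W := omega1 g'' (1 / Real.sqrt (m + 1 : ℕ)) with hWdef
  set R : ℝ → ℝ := fun t => g t + ((- g x + g' x * x) * 1 +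
    ((- g' x) * t + (- (1 / 2) * g'' x) * (t - x) ^ 2)) with hRdef
  have hD : DM1 (fun _ => 2) (fun _ => -3) (m + 1) R x =
      DM1 (fun _ => 2) (fun _ => -3) (m + 1) g x - g x
        - 1 / 2 * DM1 (fun _ => 2) (fun _ => -3) (m + 1) (fun t => (t - x) ^ 2) x * g'' x := by
    rw [hRdef, DM1_add m x g (fun t => (- g x + g' x * x) * 1 +
        ((- g' x) * t + (- (1 / 2) * g'' x) * (t - x) ^ 2)) hg (by fun_prop),
      DM1_add m x (fun t => (- g x + g' x * x) * 1) (fun t =>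
        ((- g' x) * t + (- (1 / 2) * g'' x) * (t - x) ^ 2)) (by fun_prop) (by fun_prop),
      DM1_add m x (fun t => (- g' x) * t) (fun t => (- (1 / 2) * g'' x) * (t - x) ^ 2)
        (by fun_prop) (by fun_prop),
      DM1_mul m x _ (fun _ => 1), DM1_mul m x _ (fun t => t), DM1_mul m x _ (fun t => (t - x) ^ 2),
      DM1_one, DM1_id]
    ring
  rw [← hD]
  have hR : ContinuousOn R (Set.Icc 0 1) := hg.add (by fun_prop)
  have := DM1_bd m hx R W hW hR (fun t ht => by
    have hT := taylor_bd h1 h2 hc (m + 1) hn ht hx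
    rw [← hWdef] at hT
    have e : R t = g t - g x - g' x * (t - x) - 1 / 2 * g'' x * (t - x) ^ 2 := by
      rw [hRdef]; ring
    rw [e]
    refine hT.trans ?_
    push_cast
    have hn0 : (0:ℝ) < (m:ℝ) + 1 := by positivity
    have hy : 2 * (t - x) ^ 2 ≤ 1 / ((m:ℝ) + 1) + ((m:ℝ) + 1) * (t - x) ^ 4 := by
      have : 1 / ((m:ℝ) + 1) + ((m:ℝ) + 1) * (t - x) ^ 4 - 2 * (t - x) ^ 2
          = (1 - ((m:ℝ) + 1) * (t - x) ^ 2) ^ 2 / ((m:ℝ) + 1) := by field_simp; ring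
      have h0 : 0 ≤ (1 - ((m:ℝ) + 1) * (t - x) ^ 2) ^ 2 / ((m:ℝ) + 1) := by positivity
      linarith
    have := mul_le_mul_of_nonneg_left hy hW
    linarith)
  push_cast
  exact this
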